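/- Let m, n be natural numbers with m > n, and let x > 1 be real. Then d^m/dx^m [P_n(x)·log(x−1)] = (−1)^{m+1}·(n+m)!·(m−n−1)!·(x−1)^{−m} Σ_{j=0}^{n} (−1)^j·((n+j)!/((n−j)!·(m+j)!·j!))·((x+1)/2)^j. -/

import Mathlib

open Finset Real

/-- The Legendre polynomial `P_n`, via its explicit expansion
`P_n(x) = ∑_{k=0}^{n} ((n+k)!/((k!)² (n−k)!)) ((x−1)/2)^k`. -/
noncomputable def legendreP (n : ℕ) (x : ℝ) : ℝ :=
  ∑ k ∈ Finset.range (n + 1),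
    (((n + k).factorial : ℝ) / (((k.factorial : ℝ)) ^ 2 * ((n - k).factorial : ℝ))) *
      ((x - 1) / 2) ^ k

/-- The harmonic number `H_i = ∑_{r=1}^{i} 1/r`. -/
noncomputable def harm (i : ℕ) : ℝ := ∑ r ∈ Finset.range i, (1 : ℝ) / (r + 1)

/-- The digamma function at a positive integer `j`: `ψ(j) = H_{j−1} − γ`. -/
noncomputable def psi (j : ℕ) : ℝ := harm (j - 1) - Real.eulerMascheroniConstant

/-!
Expand `P_n(y)` in powers of `y - 1`. For `k < m` the `m`-th derivative of `t ^ k * log t` contains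
no logarithm: it is a multiple of `t ^ (k - m)`, so the `m`-th derivative of `P_n(y) * log (y - 1)`
is `(x - 1) ^ (-m)` times a polynomial in `(x - 1) / 2`. Re-expanding the claimed sum by
`(x + 1) / 2 = (x - 1) / 2 + 1`, the coefficients agree by an alternating binomial sum, which is a
case of the Chu–Vandermonde identity.
-/

section

open scoped Nat

lemma sum_mul_add_one_pow {R : Type*} [CommSemiring R] (a : ℕ → R) (n : ℕ) (u : R) :
    ∑ j ∈ range (n + 1), a j * (u + 1) ^ j =
      ∑ k ∈ range (n + 1), (∑ i ∈ range (n - k + 1), (k + i).choose k * a (k + i)) * u ^ k := by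
  calc ∑ j ∈ range (n + 1), a j * (u + 1) ^ j
      = ∑ j ∈ range (n + 1), ∑ k ∈ range (j + 1), j.choose k * a j * u ^ k := by
        refine sum_congr rfl fun j _ => ?_
        rw [add_pow, mul_sum]
        exact sum_congr rfl fun k _ => by rw [one_pow]; ring
    _ = ∑ k ∈ range (n + 1), ∑ j ∈ Ico k (n + 1), j.choose k * a j * u ^ k :=
        sum_comm' fun j k => by simp only [mem_range, mem_Ico]; omega
    _ = _ := by
        refine sum_congr rfl fun k hk => ?_
        rw [sum_Ico_eq_sum_range, sum_mul, Nat.succ_sub (mem_range_succ_iff.mp hk)]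

lemma cast_factorial_ne_zero (R : Type*) [AddMonoidWithOne R] [CharZero R] (n : ℕ) :
    (n ! : R) ≠ 0 :=
  Nat.cast_ne_zero.mpr n.factorial_ne_zero

section CharZero

variable {K : Type*} [Field K] [CharZero K]

lemma sum_choose_mul_neg_one_pow_mul_factorial_div_factorial (N a d : ℕ) :
    ∑ i ∈ range (N + 1), (N.choose i : K) * ((-1) ^ i * (a + i)! / (a + d + 1 + i)!) =
      a ! * (d + N)! / ((a + d + 1 + N)! * d !) := by
  induction N generalizing a with
  | zero => simp [mul_div_mul_right, cast_factorial_ne_zero K]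
  | succ N ih =>
    have shifted_sum : ∑ i ∈ range (N + 1),
        (N.choose i : K) * ((-1) ^ (i + 1) * (a + (i + 1))! / (a + d + 1 + (i + 1))!) =
          -((a + 1)! * (d + N)! / ((a + 1 + d + 1 + N)! * d !)) := by
      rw [← ih (a + 1), ← sum_neg_distrib]
      refine sum_congr rfl fun i _ => ?_
      rw [show a + (i + 1) = a + 1 + i by ring,
        show a + d + 1 + (i + 1) = a + 1 + d + 1 + i by ring]
      ring
    rw [sum_choose_succ_mul fun i _ => (-1 : K) ^ i * (a + i)! / (a + d + 1 + i)!, ih a,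
      shifted_sum, show a + 1 + d + 1 + N = a + d + 1 + N + 1 by ring, ← add_assoc, ← add_assoc]
    have := cast_factorial_ne_zero K d
    have := cast_factorial_ne_zero K (a + d + 1 + N)
    have : (a + d + 1 + N + 1 : K) ≠ 0 := mod_cast (a + d + 1 + N).succ_ne_zero
    simp only [Nat.factorial_succ]
    push_cast
    field_simp
    ring

lemma choose_div_factorial_mul_factorial {i N : ℕ} (hi : i ≤ N) (k : ℕ) :
    ((k + i).choose k : K) / ((N - i)! * (k + i)!) = N.choose i / (k ! * N !) := by
  rw [Nat.cast_add_choose, Nat.cast_choose K hi]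
  field_simp [cast_factorial_ne_zero K]

lemma sum_neg_one_pow_mul_factorial_mul_add_one_pow {m n : ℕ} (hmn : n < m) (u : K) :
    (n + m)! * (m - n - 1)! * ∑ j ∈ range (n + 1),
        (-1) ^ j * (n + j)! / ((n - j)! * (m + j)! * j !) * (u + 1) ^ j =
      ∑ k ∈ range (n + 1), (-1) ^ k * (n + k)! * (m - k - 1)! / (k ! * (n - k)!) * u ^ k := by
  rw [sum_mul_add_one_pow, mul_sum]
  refine sum_congr rfl fun k hk => ?_
  obtain ⟨d, rfl⟩ := Nat.exists_eq_add_of_lt hmn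
  obtain ⟨N, rfl⟩ := Nat.exists_eq_add_of_le (mem_range_succ_iff.mp hk)
  have coeff_eq (i : ℕ) (hi : i ∈ range (N + 1)) :
      ((k + i).choose k : K) * ((-1) ^ (k + i) * (k + N + (k + i))! /
          ((k + N - (k + i))! * (k + N + d + 1 + (k + i))! * (k + i)!)) =
        (-1) ^ k / (k ! * N !) * (N.choose i *
          ((-1) ^ i * (k + N + k + i)! / (k + N + k + d + 1 + i)!)) := by
    calc _ = (k + i).choose k / ((N - i)! * (k + i)!) * ((-1 : K) ^ (k + i) *
          (k + N + k + i)! / (k + N + k + d + 1 + i)!) := by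
          rw [Nat.add_sub_add_left, ← add_assoc (k + N),
            show k + N + d + 1 + (k + i) = k + N + k + d + 1 + i by ring]
          ring
      _ = _ := by
          rw [choose_div_factorial_mul_factorial (mem_range_succ_iff.mp hi), pow_add]
          ring
  rw [Nat.add_sub_cancel_left, sum_congr rfl coeff_eq, ← mul_sum,
    sum_choose_mul_neg_one_pow_mul_factorial_div_factorial,
    show k + N + (k + N + d + 1) = k + N + k + d + 1 + N by ring,
    show k + N + d + 1 - (k + N) - 1 = d by omega, show k + N + d + 1 - k - 1 = d + N by omega]
  field_simp [cast_factorial_ne_zero K]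

end CharZero

lemma iteratedDeriv_pow_mul_log {k m : ℕ} (hkm : k < m) {x : ℝ} (hx : x ≠ 0) :
    iteratedDeriv m (fun y => y ^ k * log y) x =
      (-1) ^ (m + k + 1) * k ! * (m - k - 1)! / x ^ (m - k) := by
  induction k generalizing m with
  | zero =>
    obtain ⟨d, rfl⟩ := Nat.exists_eq_add_of_lt hkm
    simp only [pow_zero, one_mul, zero_add]
    rw [iteratedDeriv_succ', deriv_log', iteratedDeriv_eq_iterate, iter_deriv_inv,
      show (-1 - d : ℤ) = -((d + 1 : ℕ) : ℤ) by push_cast; ring, zpow_neg, zpow_natCast]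
    simp [pow_succ, div_eq_mul_inv]
  | succ k ih =>
    obtain ⟨m, rfl⟩ := Nat.exists_eq_add_one_of_ne_zero (Nat.ne_zero_of_lt hkm)
    have hkm' : k < m := Nat.lt_of_succ_lt_succ hkm
    have deriv_eventuallyEq : deriv (fun y : ℝ => y ^ (k + 1) * log y) =ᶠ[nhds x]
        fun y => (k + 1 : ℝ) * (y ^ k * log y) + y ^ k := by
      filter_upwards [isOpen_ne.mem_nhds hx] with y hy
      refine ((hasDerivAt_pow (k + 1) y).mul (hasDerivAt_log hy)).deriv.trans ?_
      rw [pow_succ y k, mul_assoc (y ^ k), mul_inv_cancel₀ hy, Nat.add_sub_cancel]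
      push_cast
      ring
    have hpow : ContDiffAt ℝ m (fun y : ℝ => y ^ k) x := by fun_prop
    have hlog : ContDiffAt ℝ m log x := contDiffAt_log.mpr hx
    rw [iteratedDeriv_succ', deriv_eventuallyEq.iteratedDeriv_eq,
      iteratedDeriv_fun_add (contDiffAt_const.mul (hpow.mul hlog)) hpow,
      iteratedDeriv_const_mul_field, ih hkm', iteratedDeriv_pow, Nat.descFactorial_of_lt hkm',
      Nat.add_sub_add_right, Nat.factorial_succ]
    push_cast
    ring

lemma iteratedDeriv_sum_mul_pow_mul_log {m : ℕ} {s : Finset ℕ} (hs : ∀ k ∈ s, k < m) (c : ℕ → ℝ)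
    {x : ℝ} (hx : x ≠ 0) :
    iteratedDeriv m (fun y => (∑ k ∈ s, c k * y ^ k) * log y) x =
      (-1) ^ (m + 1) * x ^ (-(m : ℤ)) *
        ∑ k ∈ s, (-1) ^ k * k ! * (m - k - 1)! * c k * x ^ k := by
  have contDiffAt_term (k : ℕ) : ContDiffAt ℝ m (fun y => c k * (y ^ k * log y)) x :=
    contDiffAt_const.mul ((contDiff_id.pow k).contDiffAt.mul (contDiffAt_log.mpr hx))
  simp only [sum_mul, mul_assoc (c _)]
  rw [iteratedDeriv_fun_sum fun k _ => contDiffAt_term k, mul_sum]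
  refine sum_congr rfl fun k hk => ?_
  rw [iteratedDeriv_const_mul_field, iteratedDeriv_pow_mul_log (hs k hk) hx,
    pow_sub₀ x hx (hs k hk).le, zpow_neg, zpow_natCast]
  field_simp
  ring

lemma iteratedDeriv_legendreP_mul_log {m n : ℕ} (hmn : n < m) {x : ℝ} (hx : x ≠ 1) :
    iteratedDeriv m (fun y => legendreP n y * log (y - 1)) x =
      (-1) ^ (m + 1) * (x - 1) ^ (-(m : ℤ)) * ∑ k ∈ range (n + 1),
        (-1) ^ k * (n + k)! * (m - k - 1)! / (k ! * (n - k)!) * ((x - 1) / 2) ^ k := by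
  let c (k : ℕ) : ℝ := (n + k)! / (k ! ^ 2 * (n - k)!) / 2 ^ k
  have legendreP_eq (y : ℝ) : legendreP n y = ∑ k ∈ range (n + 1), c k * (y - 1) ^ k :=
    sum_congr rfl fun k _ => by rw [div_pow]; ring
  have lt_of_mem_range (k : ℕ) (hk : k ∈ range (n + 1)) : k < m :=
    (mem_range_succ_iff.mp hk).trans_lt hmn
  simp only [legendreP_eq]
  rw [iteratedDeriv_comp_sub_const m (fun t => (∑ k ∈ range (n + 1), c k * t ^ k) * log t) 1]
  beta_reduce
  rw [iteratedDeriv_sum_mul_pow_mul_log lt_of_mem_range c (sub_ne_zero.mpr hx)]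
  congr 1
  refine sum_congr rfl fun k _ => ?_
  simp only [c, div_pow]
  field_simp

end

theorem stmt_11_general (m n : ℕ) (hmn : n < m) (x : ℝ) (hx : x ≠ 1) :
    iteratedDeriv m (fun y => legendreP n y * Real.log |y - 1|) x =
      (-1 : ℝ) ^ (m + 1) * ((n + m).factorial : ℝ) * ((m - n - 1).factorial : ℝ) *
        (x - 1) ^ (-(m : ℤ)) *
        ∑ j ∈ Finset.range (n + 1),
          (-1 : ℝ) ^ j * ((n + j).factorial : ℝ) /
              (((n - j).factorial : ℝ) * ((m + j).factorial : ℝ) * (j.factorial : ℝ)) *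
            ((x + 1) / 2) ^ j := by
  simp only [Real.log_abs]
  rw [iteratedDeriv_legendreP_mul_log hmn hx,
    ← sum_neg_one_pow_mul_factorial_mul_add_one_pow hmn,
    show (x - 1) / 2 + 1 = (x + 1) / 2 by ring]
  ring

theorem stmt_11 (m n : ℕ) (hmn : n < m) (x : ℝ) (hx : 1 < x) :
    iteratedDeriv m (fun y => legendreP n y * Real.log (y - 1)) x =
      (-1 : ℝ) ^ (m + 1) * ((n + m).factorial : ℝ) * ((m - n - 1).factorial : ℝ) *
        (x - 1) ^ (-(m : ℤ)) *
        ∑ j ∈ Finset.range (n + 1),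
          (-1 : ℝ) ^ j * ((n + j).factorial : ℝ) /
              (((n - j).factorial : ℝ) * ((m + j).factorial : ℝ) * (j.factorial : ℝ)) *
            ((x + 1) / 2) ^ j := by
  simpa only [Real.log_abs] using stmt_11_general m n hmn x hx.ne'
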